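/- There exist two computable infinite strings α and β over {0,1} such that α ≤_qi β (some quasi-isometric reduction from α to β exists) but α is not mqi-reducible to β (no computable quasi-isometric reduction from α to β exists). -/

import Mathlib

/-- An infinite string over an alphabet `Γ` is a function `ℕ → Γ`, with positions
indexed from 1.  `IsQI C α β f` says that `f : ℕ → ℕ` is a `C`-quasi-isometry from
the string `α` to the string `β`: `C ≥ 1`, `f` maps positions (`≥ 1`) to positions,
`f` is color-preserving (`β (f x) = α x`), condition (a) holds (`f 1 ≤ C` and
`|f (x+1) − f x| ≤ C`), and condition (b) holds (`x + C < y → f x < f y`). -/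
def IsQI {Γ : Type*} (C : ℕ) (α β : ℕ → Γ) (f : ℕ → ℕ) : Prop :=
  1 ≤ C ∧
  (∀ x, 1 ≤ x → 1 ≤ f x) ∧
  (∀ x, 1 ≤ x → β (f x) = α x) ∧
  f 1 ≤ C ∧
  (∀ x, 1 ≤ x → |((f (x + 1) : ℤ)) - (f x : ℤ)| ≤ (C : ℤ)) ∧
  (∀ x y, 1 ≤ x → x + C < y → f x < f y)

/-- Quasi-isometric reducibility `α ≤_qi β`: some `C`-quasi-isometry from `α` to `β`
exists. -/
def QIred {Γ : Type*} (α β : ℕ → Γ) : Prop := ∃ C f, IsQI C α β f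

/-- Many-one quasi-isometric reducibility `α ≤_mqi β`: some computable
`C`-quasi-isometry from `α` to `β` exists. -/
def MQIred {Γ : Type*} (α β : ℕ → Γ) : Prop :=
  ∃ C f, IsQI C α β f ∧ Computable f

/-- One-one quasi-isometric reducibility `α ≤_1qi β`: some computable
`C`-quasi-isometry from `α` to `β` exists which is injective on positions. -/
def OQIred {Γ : Type*} (α β : ℕ → Γ) : Prop :=
  ∃ C f, IsQI C α β f ∧ Computable f ∧
    (∀ x y, 1 ≤ x → 1 ≤ y → f x = f y → x = y)

/-- Permutation quasi-isometric reducibility `α ≤_pqi β`: some computable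
`C`-quasi-isometry from `α` to `β` exists which is a bijection on positions. -/
def PQIred {Γ : Type*} (α β : ℕ → Γ) : Prop :=
  ∃ C f, IsQI C α β f ∧ Computable f ∧
    (∀ x y, 1 ≤ x → 1 ≤ y → f x = f y → x = y) ∧
    (∀ y, 1 ≤ y → ∃ x, 1 ≤ x ∧ f x = y)

/-- `α ≡_mqi β`. -/
def MQIequiv {Γ : Type*} (α β : ℕ → Γ) : Prop := MQIred α β ∧ MQIred β α

/-- `α ≡_1qi β`. -/
def OQIequiv {Γ : Type*} (α β : ℕ → Γ) : Prop := OQIred α β ∧ OQIred β α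

/-- `α ≡_pqi β`. -/
def PQIequiv {Γ : Type*} (α β : ℕ → Γ) : Prop := PQIred α β ∧ PQIred β α

/-!
A string is cut into blocks of linearly growing length, coloured by the parity of their index. A
quasi-isometry between two such strings has to send all but the first blocks to blocks, with a
constant lag. The target also has valves, blocks of alternating colours that contain every local
pattern; there, and only there, the lag can change, by an amount that is bounded in terms of the
quasi-isometry constant `C`. Between consecutive valves, a checkpoint forces the lag `2 * k` at that
time `T` to satisfy a prescribed primitive recursive constraint `G T k`: one source block is marked,
and so are the target blocks at the admissible distances. So quasi-isometries correspond to walks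
`k` of bounded speed that satisfy `G`, and computable ones to computable walks.

Up to a bounded drift, all that such a walk remembers is the limit of `k T / T`, but this limit
carries infinitely many bits, one for each digit in base five. Restricting the digits to `1` and `3`
keeps `k T / T` away from carries, so that a walk of bounded speed cannot change a digit once `T` is
large. The constraint requires that the digits diagonalize against all programs: the rounded
multiples of a suitable real number satisfy it, while from a computable walk one could compute the
digits.
-/

/-! ### Walks that escape diagonalization -/

section walks

open Nat.Partrec (Code)

/-- From time `N` on, `k` is a walk within the triangle `k T ≤ T` which moves by at most `B` per
step and satisfies the constraint `G T (k T)` at every time `T`. -/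
structure IsWalk (G : ℕ → ℕ → Prop) (B N : ℕ) (k : ℕ → ℕ) : Prop where
  le_self : ∀ T ≥ N, k T ≤ T
  rel : ∀ T ≥ N, G T (k T)
  succ_le : ∀ T ≥ N, k (T + 1) ≤ k T + B
  le_succ : ∀ T ≥ N, k T ≤ k (T + 1) + B

/-- The digit of `k / T` at the place `5⁻⁽ᵉ⁺¹⁾` of its base-five expansion. -/
def ratioDigit (e k T : ℕ) : ℕ := k * 5 ^ (e + 1) / T % 5

/-- The constraint on walks: each base-five digit of `k / T` at a place coarse enough to be visible
at time `T` encodes a bit, `1` standing for `0` and `3` for `1`, and within `T` steps the `e`-th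
program on input `e` is not seen to output the `e`-th bit. -/
def Diagonalizes (T k : ℕ) : Prop :=
  ∀ e, 5 ^ (e + 2) ≤ T → (ratioDigit e k T = 1 ∨ ratioDigit e k T = 3) ∧
    ratioDigit e k T / 2 ∉ Code.evaln T (Denumerable.ofNat Code e) e

theorem primrec₂_pow : Primrec₂ ((· ^ ·) : ℕ → ℕ → ℕ) :=
  Primrec₂.unpaired'.1 Nat.Primrec.pow

theorem primrec_ratioDigit : Primrec fun p : ℕ × ℕ × ℕ ↦ ratioDigit p.1 p.2.1 p.2.2 :=
  Primrec.nat_mod.comp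
    (Primrec.nat_div.comp
      (Primrec.nat_mul.comp (Primrec.fst.comp .snd)
        (primrec₂_pow.comp (.const 5) (Primrec.succ.comp .fst)))
      (Primrec.snd.comp .snd))
    (.const 5)

theorem lt_of_five_pow_le {e T : ℕ} (h : 5 ^ (e + 2) ≤ T) : e < T := by
  have : e + 2 < 5 ^ (e + 2) := Nat.lt_pow_self (by norm_num)
  omega

theorem primrecRel_diagonalizes : PrimrecRel Diagonalizes := by
  have hdigit : Primrec fun q : ℕ × ℕ × ℕ ↦ ratioDigit q.1 q.2.2 q.2.1 :=
    primrec_ratioDigit.comp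
      (Primrec.fst.pair ((Primrec.snd.comp .snd).pair (Primrec.fst.comp .snd)))
  have hvisible : PrimrecPred fun q : ℕ × ℕ × ℕ ↦ 5 ^ (q.1 + 2) ≤ q.2.1 :=
    Primrec.nat_le.comp
      (primrec₂_pow.comp (.const 5) (Primrec.nat_add.comp .fst (.const 2)))
      (Primrec.fst.comp .snd)
  have houtput : PrimrecPred fun q : ℕ × ℕ × ℕ ↦
      Code.evaln q.2.1 (Denumerable.ofNat Code q.1) q.1 = some (ratioDigit q.1 q.2.2 q.2.1 / 2) :=
    Primrec.eq.comp
      (Code.primrec_evaln.comp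
        (((Primrec.fst.comp .snd).pair ((Primrec.ofNat Code).comp .fst)).pair .fst))
      (Primrec.option_some.comp (Primrec.nat_div.comp hdigit (.const 2)))
  have hbody : PrimrecRel fun (e : ℕ) (p : ℕ × ℕ) ↦ ¬ 5 ^ (e + 2) ≤ p.1 ∨
      (ratioDigit e p.2 p.1 = 1 ∨ ratioDigit e p.2 p.1 = 3) ∧
        ¬ Code.evaln p.1 (Denumerable.ofNat Code e) e = some (ratioDigit e p.2 p.1 / 2) :=
    hvisible.not.or
      (((Primrec.eq.comp hdigit (.const 1)).or (Primrec.eq.comp hdigit (.const 3))).and houtput.not)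
  refine (hbody.forall_mem_list.comp (Primrec.list_range.comp .fst) .id).of_eq fun p ↦
    ⟨fun h e he ↦ ?_, fun h e _ ↦ (em _).symm.imp_right (h e)⟩
  exact (h e (List.mem_range.2 (lt_of_five_pow_le he))).resolve_left (not_not_intro he)

theorem exists_bit_notMem_eval (c : Code) (n : ℕ) :
    ∃ d : Fin 5, (d = 1 ∨ d = 3) ∧ (d : ℕ) / 2 ∉ c.eval n := by
  by_cases h : 0 ∈ c.eval n
  · exact ⟨3, .inr rfl, fun h' ↦ absurd (Part.mem_unique h h') (by decide)⟩
  · exact ⟨1, .inl rfl, h⟩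

theorem base_mul_ofDigits {b : ℕ} (d : ℕ → Fin b) :
    b * Real.ofDigits d = d 0 + Real.ofDigits fun i ↦ d (i + 1) := by
  have hb : (b : ℝ) ≠ 0 := by exact_mod_cast (Fin.pos (d 0)).ne'
  rw [Real.ofDigits_eq_sum_add_ofDigits d 1]
  simp only [Finset.sum_range_one, Real.ofDigitsTerm, zero_add, pow_one]
  field_simp

theorem exists_base_pow_mul_ofDigits_eq {b : ℕ} (d : ℕ → Fin b) (n : ℕ) :
    ∃ m : ℕ, (b : ℝ) ^ (n + 1) * Real.ofDigits d =
      (b * m + d n : ℕ) + Real.ofDigits fun i ↦ d (i + (n + 1)) := by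
  induction n with
  | zero => exact ⟨0, by simpa using base_mul_ofDigits d⟩
  | succ n ih =>
    obtain ⟨m, hm⟩ := ih
    refine ⟨b * m + d n, ?_⟩
    have htail := base_mul_ofDigits fun i ↦ d (i + (n + 1))
    simp only [zero_add, add_right_comm _ 1 (n + 1)] at htail
    rw [pow_succ', mul_assoc, hm, mul_add, htail]
    push_cast
    ring_nf

theorem natFloor_mul_mul_div {y : ℝ} {P q T : ℕ} (hy : 0 ≤ y) (hT : 0 < T)
    (hlow : q + P / T ≤ P * y) (hhigh : P * y < q + 1) : ⌊T * y⌋₊ * P / T = q := by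
  have _ : (0 : ℝ) < T := by exact_mod_cast hT
  have hfloor_le : (⌊T * y⌋₊ : ℝ) ≤ T * y := Nat.floor_le (by positivity)
  have hlt_floor : T * y - 1 ≤ (⌊T * y⌋₊ : ℝ) := (Nat.sub_one_lt_floor _).le
  have _ : (0 : ℝ) ≤ P := P.cast_nonneg
  apply Nat.div_eq_of_lt_le
  · suffices (q * T : ℝ) ≤ ⌊T * y⌋₊ * P by exact_mod_cast this
    calc (q * T : ℝ) = (q + P / T) * T - P := by field_simp; ring
      _ ≤ P * y * T - P := by gcongr
      _ = (T * y - 1) * P := by ring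
      _ ≤ ⌊T * y⌋₊ * P := by gcongr
  · suffices (⌊T * y⌋₊ * P : ℝ) < (q + 1) * T by exact_mod_cast this
    calc (⌊T * y⌋₊ * P : ℝ) ≤ T * y * P := by gcongr
      _ = P * y * T := by ring
      _ < (q + 1) * T := by gcongr

theorem ratioDigit_natFloor_mul_ofDigits {d : ℕ → Fin 5} (hd : ∀ i, d i = 1 ∨ d i = 3) {e T : ℕ}
    (hT : 5 ^ (e + 2) ≤ T) : ratioDigit e ⌊T * Real.ofDigits d⌋₊ T = d e := by
  have hT0 : 0 < T := (by positivity : 0 < 5 ^ (e + 2)).trans_le hT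
  obtain ⟨m, hm⟩ := exists_base_pow_mul_ofDigits_eq d e
  set tail : ℝ := Real.ofDigits fun i ↦ d (i + (e + 1))
  have hfirst : 5 * tail = d (e + 1) + Real.ofDigits fun i ↦ d (i + 1 + (e + 1)) := by
    simpa using base_mul_ofDigits fun i ↦ d (i + (e + 1))
  have hdigit : (1 : ℝ) ≤ d (e + 1) ∧ (d (e + 1) : ℝ) ≤ 3 := by
    rcases hd (e + 1) with h | h <;> rw [h] <;> norm_num [Fin.val_ofNat]
  have htail_low : 1 / 5 ≤ tail := by
    linarith [Real.ofDigits_nonneg fun i ↦ d (i + 1 + (e + 1))]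
  have htail_high : tail < 1 := by
    linarith [Real.ofDigits_le_one fun i ↦ d (i + 1 + (e + 1))]
  have hscale : ((5 ^ (e + 1) : ℕ) : ℝ) / T ≤ 1 / 5 := by
    rw [div_le_div_iff₀ (by exact_mod_cast hT0) (by norm_num), one_mul]
    exact_mod_cast (pow_succ 5 (e + 1)).symm.trans_le hT
  have hfloor : ⌊T * Real.ofDigits d⌋₊ * 5 ^ (e + 1) / T = 5 * m + d e := by
    apply natFloor_mul_mul_div (Real.ofDigits_nonneg d) hT0 <;> push_cast at hm hscale ⊢ <;>
      linarith
  rw [ratioDigit, hfloor]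
  omega

theorem exists_isWalk_diagonalizes : ∃ K, Monotone K ∧ IsWalk Diagonalizes 1 0 K := by
  choose d hd hdiag using fun e ↦ exists_bit_notMem_eval (Denumerable.ofNat Code e) e
  set y := Real.ofDigits d
  have hy0 : 0 ≤ y := Real.ofDigits_nonneg d
  have hy1 : y ≤ 1 := Real.ofDigits_le_one d
  have hmono : Monotone fun T : ℕ ↦ ⌊T * y⌋₊ := fun S T h ↦ by dsimp only; gcongr
  refine ⟨_, hmono, ?_, ?_, ?_, ?_⟩
  · exact fun T _ ↦ Nat.floor_le_of_le (mul_le_of_le_one_right T.cast_nonneg hy1)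
  · intro T _ e hT
    rw [ratioDigit_natFloor_mul_ofDigits hd hT]
    refine ⟨?_, fun hout ↦ hdiag e (Code.evaln_sound hout)⟩
    rcases hd e with h | h <;> simp [h]
  · intro T _
    rw [← Nat.floor_add_one (by positivity)]
    apply Nat.floor_mono
    push_cast
    linarith
  · exact fun T _ ↦ (hmono T.le_succ).trans (Nat.le_succ _)

theorem ratioDigit_succ_eq {B e k k' T : ℕ} (hT : (B + 2) * 5 ^ (e + 2) ≤ T)
    (hk : k' ≤ T + 1) (hk' : k' ≤ k + B) (hk'' : k ≤ k' + B)
    (hd : ratioDigit e k T = 1 ∨ ratioDigit e k T = 3)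
    (hd' : ratioDigit e k' (T + 1) = 1 ∨ ratioDigit e k' (T + 1) = 3) :
    ratioDigit e k' (T + 1) = ratioDigit e k T := by
  unfold ratioDigit at *
  have hP : 0 < 5 ^ (e + 1) := by positivity
  rw [pow_succ] at hT
  generalize 5 ^ (e + 1) = P at *
  have hTB : (B + 1) * P < T := by nlinarith
  set a := k * P / T
  set a' := k' * P / (T + 1)
  have ha : a * T ≤ k * P := Nat.div_mul_le_self _ _
  have ha_lt : k * P < (a + 1) * T := Nat.lt_mul_of_div_lt (Nat.lt_succ_self a) (by omega)
  have ha' : a' * (T + 1) ≤ k' * P := Nat.div_mul_le_self _ _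
  have ha'_lt : k' * P < (a' + 1) * (T + 1) := Nat.lt_mul_of_div_lt (Nat.lt_succ_self a') (by omega)
  have ha'_le : a' ≤ P := Nat.div_le_of_le_mul (Nat.mul_le_mul_right P hk)
  have hforward : a' ≤ a + 1 := by
    by_contra! h
    nlinarith [Nat.mul_le_mul_right P hk', Nat.mul_le_mul_right (T + 1) h]
  have hbackward : a ≤ a' + 1 := by
    by_contra! h
    nlinarith [Nat.mul_le_mul_right P hk'', Nat.mul_le_mul_right T h]
  omega

namespace IsWalk

/-- The time from which on a walk of speed `B` can no longer change its digit with index `e`. -/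
def freezeTime (B N e : ℕ) : ℕ := (B + 2) * 5 ^ (e + 2) + N

theorem primrec_freezeTime (B N : ℕ) : Primrec (freezeTime B N) :=
  Primrec.nat_add.comp
    (Primrec.nat_mul.comp (.const (B + 2))
      (primrec₂_pow.comp (.const 5) (Primrec.nat_add.comp .id (.const 2))))
    (.const N)

theorem five_pow_le_of_freezeTime_le {B N e T : ℕ} (h : freezeTime B N e ≤ T) :
    5 ^ (e + 2) ≤ T := by
  unfold freezeTime at h
  nlinarith

variable {B N : ℕ} {k : ℕ → ℕ}

theorem ratioDigit_eq_freezeTime (h : IsWalk Diagonalizes B N k) (e n : ℕ) :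
    ratioDigit e (k (freezeTime B N e + n)) (freezeTime B N e + n) =
      ratioDigit e (k (freezeTime B N e)) (freezeTime B N e) := by
  induction n with
  | zero => rfl
  | succ n ih =>
    rw [← ih, ← add_assoc]
    set T := freezeTime B N e + n
    have hfreeze : freezeTime B N e ≤ T := Nat.le_add_right _ _
    have hN : N ≤ T := (Nat.le_add_left _ _).trans hfreeze
    exact ratioDigit_succ_eq ((Nat.le_add_right _ _).trans hfreeze) (h.le_self (T + 1) (by omega))
      (h.succ_le T hN) (h.le_succ T hN)
      (h.rel T hN e (five_pow_le_of_freezeTime_le hfreeze)).1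
      (h.rel (T + 1) (by omega) e (five_pow_le_of_freezeTime_le (hfreeze.trans T.le_succ))).1

theorem not_computable (h : IsWalk Diagonalizes B N k) : ¬ Computable k := by
  intro hk
  let bit (e : ℕ) : ℕ := ratioDigit e (k (freezeTime B N e)) (freezeTime B N e) / 2
  have hfreeze : Computable (freezeTime B N) := (primrec_freezeTime B N).to_comp
  have hbit : Computable bit :=
    Primrec.nat_div.to_comp.comp
      (primrec_ratioDigit.to_comp.comp (Computable.id.pair ((hk.comp hfreeze).pair hfreeze)))
      (.const 2)
  obtain ⟨c, hc⟩ := Code.exists_code.1 (Partrec.nat_iff.1 hbit.partrec)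
  set e := Encodable.encode c
  have heval : bit e ∈ c.eval e := by simp [hc]
  obtain ⟨n, hn⟩ := Code.evaln_complete.1 heval
  set T := freezeTime B N e + n
  have hT : freezeTime B N e ≤ T := Nat.le_add_right _ _
  have havoid := (h.rel T ((Nat.le_add_left _ _).trans hT) e (five_pow_le_of_freezeTime_le hT)).2
  rw [Denumerable.ofNat_encode, h.ratioDigit_eq_freezeTime] at havoid
  exact havoid (Code.evaln_mono (Nat.le_add_left _ _) hn)

end IsWalk

end walks

/-! ### Quasi-isometries -/

namespace IsQI

variable {Γ : Type*} {C : ℕ} {α β : ℕ → Γ} {f : ℕ → ℕ}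

theorem one_le (h : IsQI C α β f) {x : ℕ} (hx : 1 ≤ x) : 1 ≤ f x := h.2.1 x hx

theorem apply_eq (h : IsQI C α β f) {x : ℕ} (hx : 1 ≤ x) : β (f x) = α x := h.2.2.1 x hx

theorem apply_one_le (h : IsQI C α β f) : f 1 ≤ C := h.2.2.2.1

theorem lt (h : IsQI C α β f) {x y : ℕ} (hx : 1 ≤ x) (hxy : x + C < y) : f x < f y :=
  h.2.2.2.2.2 x y hx hxy

theorem apply_succ_le (h : IsQI C α β f) {x : ℕ} (hx : 1 ≤ x) : f (x + 1) ≤ f x + C := by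
  have := (abs_le.1 (h.2.2.2.2.1 x hx)).2
  omega

theorem apply_le_apply_succ_add (h : IsQI C α β f) {x : ℕ} (hx : 1 ≤ x) :
    f x ≤ f (x + 1) + C := by
  have := (abs_le.1 (h.2.2.2.2.1 x hx)).1
  omega

theorem apply_add_le (h : IsQI C α β f) {x : ℕ} (hx : 1 ≤ x) (d : ℕ) :
    f (x + d) ≤ f x + C * d := by
  induction d with
  | zero => rfl
  | succ d ih =>
    rw [← add_assoc, mul_add_one]
    linarith [h.apply_succ_le (hx.trans (Nat.le_add_right x d))]

theorem apply_le_apply_add_add (h : IsQI C α β f) {x : ℕ} (hx : 1 ≤ x) (d : ℕ) :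
    f x ≤ f (x + d) + C * d := by
  induction d with
  | zero => rfl
  | succ d ih =>
    rw [← add_assoc, mul_add_one]
    linarith [h.apply_le_apply_succ_add (hx.trans (Nat.le_add_right x d))]

theorem add_le_apply_add (h : IsQI C α β f) {x : ℕ} (hx : 1 ≤ x) {j d : ℕ} (hj : 1 ≤ j)
    (hd : (C + 1) * j ≤ d) : f x + j ≤ f (x + d) := by
  induction j, hj using Nat.le_induction generalizing d with
  | base => exact h.lt hx (by omega)
  | succ j _ ih =>
    have hprev := ih le_rfl
    have hlast : f (x + (C + 1) * j) < f (x + d) := h.lt (by omega) (by linarith)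
    omega

end IsQI

theorem qIred_of_strictMono {Γ : Type*} {α β : ℕ → Γ} {h : ℕ → ℕ} {B : ℕ} (hmono : StrictMono h)
    (hB : ∀ x, h (x + 1) ≤ h x + B) (hcolor : ∀ x, β (h x) = α x ∨ β (h x + 1) = α x) :
    QIred α β := by
  classical
  let f (x : ℕ) : ℕ := if β (h x) = α x then h x else h x + 1
  have hf (x : ℕ) : h x ≤ f x ∧ f x ≤ h x + 1 := by
    dsimp only [f]
    split_ifs <;> omega
  refine ⟨h 1 + 1 + B, f, by omega, fun x hx ↦ ?_, fun x _ ↦ ?_, ?_, fun x _ ↦ ?_,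
    fun x y _ hxy ↦ ?_⟩
  · exact (hx.trans (hmono.le_apply)).trans (hf x).1
  · dsimp only [f]
    split_ifs with hx
    exacts [hx, (hcolor x).resolve_left hx]
  · linarith [(hf 1).2]
  · have := hB x
    have := hmono (Nat.lt_add_one x)
    have := hf x
    have := hf (x + 1)
    rw [abs_le]
    constructor <;> omega
  · have hgap := hmono.add_le_nat (y - x) x
    rw [Nat.sub_add_cancel (by omega)] at hgap
    linarith [(hf x).2, (hf y).1, Nat.sub_add_cancel (by omega : x ≤ y)]

/-! ### Block strings -/

open Classical in
/-- The string whose positions are cut into blocks, the `r`-th one consisting of the positions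
`r * r + o` with `o ≤ 2 * r`. Blocks are monochromatic, of colour `1` for even `r` and `0` for odd
`r`, with two exceptions: a block in `V`, a *valve*, has a texture of alternating colours, and an
odd block in `M` is *marked* by the colour `1` at its centre `r * r + r`. -/
noncomputable def blockString (V M : ℕ → Prop) (x : ℕ) : Fin 2 :=
  let r := Nat.sqrt x
  if if V r then x % 2 = 0 else r % 2 = 0 ∨ (x = r * r + r ∧ M r) then 1 else 0

theorem exists_eq_sqrt_mul_sqrt_add (x : ℕ) :
    ∃ o ≤ 2 * Nat.sqrt x, x = Nat.sqrt x * Nat.sqrt x + o :=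
  ⟨x - Nat.sqrt x * Nat.sqrt x, by have := Nat.sqrt_le_add x; omega,
    by have := Nat.sqrt_le x; omega⟩

section blockString

variable {V M : ℕ → Prop}

theorem blockString_eq_one_iff_of_valve {x : ℕ} (h : V (Nat.sqrt x)) :
    blockString V M x = 1 ↔ x % 2 = 0 := by
  simp [blockString, h]

theorem blockString_eq_one_iff_of_not_valve {x : ℕ} (h : ¬ V (Nat.sqrt x)) :
    blockString V M x = 1 ↔
      Nat.sqrt x % 2 = 0 ∨ (x = Nat.sqrt x * Nat.sqrt x + Nat.sqrt x ∧ M (Nat.sqrt x)) := by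
  simp [blockString, h, or_iff_not_imp_left]

theorem blockString_mul_self_add {r o : ℕ} (ho : o ≤ 2 * r) (h : ¬ V r) :
    blockString V M (r * r + o) = 1 ↔ r % 2 = 0 ∨ (o = r ∧ M r) := by
  have hsqrt : Nat.sqrt (r * r + o) = r := Nat.sqrt_add_eq r (by omega)
  rw [blockString_eq_one_iff_of_not_valve (by rwa [hsqrt]), hsqrt, add_right_inj]

theorem blockString_bot_mul_self_add {r o : ℕ} (ho : o ≤ 2 * r) :
    blockString ⊥ M (r * r + o) = 1 ↔ r % 2 = 0 ∨ (o = r ∧ M r) :=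
  blockString_mul_self_add ho id

theorem computable_blockString (hV : PrimrecPred V) (hM : PrimrecPred M) :
    Computable (blockString V M) := by
  classical
  have hsqrt : Primrec Nat.sqrt := Primrec.nat_sqrt
  have heven {g : ℕ → ℕ} (hg : Primrec g) : PrimrecPred fun x ↦ g x % 2 = 0 :=
    Primrec.eq.comp (Primrec.nat_mod.comp hg (.const 2)) (.const 0)
  have hcenter : PrimrecPred fun x ↦ x = Nat.sqrt x * Nat.sqrt x + Nat.sqrt x :=
    Primrec.eq.comp .id (Primrec.nat_add.comp (Primrec.nat_mul.comp hsqrt hsqrt) hsqrt)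
  have hone := ((hV.comp hsqrt).and (heven .id)).or
    ((hV.comp hsqrt).not.and ((heven hsqrt).or (hcenter.and (hM.comp hsqrt))))
  exact ((Primrec.ite hone (.const 1) (.const 0)).of_eq fun x ↦ by
    by_cases h : V (Nat.sqrt x) <;> simp [blockString, h]).to_comp

end blockString

/-! ### Quasi-isometries between block strings -/

theorem eq_of_eq_one_iff {a b : Fin 2} (h : a = 1 ↔ b = 1) : a = b := by omega

section valve

variable {V M : ℕ → Prop}

theorem sqrt_succ_eq_or (y : ℕ) : Nat.sqrt (y + 1) = Nat.sqrt y ∨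
    (Nat.sqrt (y + 1) = Nat.sqrt y + 1 ∧ y + 1 = (Nat.sqrt y + 1) * (Nat.sqrt y + 1)) := by
  have hle : Nat.sqrt (y + 1) ≤ Nat.sqrt y + 1 := Nat.sqrt_succ_le_succ_sqrt y
  have hge : Nat.sqrt y ≤ Nat.sqrt (y + 1) := Nat.sqrt_le_sqrt y.le_succ
  rcases hge.eq_or_lt with h | h
  · exact .inl h.symm
  · have hsqrt : Nat.sqrt (y + 1) = Nat.sqrt y + 1 := by omega
    exact .inr ⟨hsqrt, le_antisymm (Nat.succ_le_succ_sqrt y) (Nat.le_sqrt.1 hsqrt.ge)⟩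

theorem blockString_eq_or_succ_eq {y : ℕ} (h : V (Nat.sqrt y)) (h' : V (Nat.sqrt y + 1))
    (c : Fin 2) : blockString V M y = c ∨ blockString V M (y + 1) = c := by
  have hsucc : V (Nat.sqrt (y + 1)) := by
    rcases sqrt_succ_eq_or y with hsqrt | ⟨hsqrt, -⟩ <;> rwa [hsqrt]
  have hy := blockString_eq_one_iff_of_valve (M := M) h
  have hy' := blockString_eq_one_iff_of_valve (M := M) hsucc
  omega

theorem blockString_eq_one_or_succ_eq_one (hV : ∀ j, V j → j % 2 = 1 → V (j + 1)) {y : ℕ}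
    (h : V (Nat.sqrt y)) : blockString V M y = 1 ∨ blockString V M (y + 1) = 1 := by
  rw [blockString_eq_one_iff_of_valve h]
  refine (Nat.mod_two_eq_zero_or_one y).imp_right fun hodd ↦ ?_
  have hsucc : V (Nat.sqrt (y + 1)) := by
    rcases sqrt_succ_eq_or y with hsqrt | ⟨hsqrt, hy⟩
    · rwa [hsqrt]
    · rw [hsqrt]
      refine hV _ h (by_contra fun heven ↦ ?_)
      have : (Nat.sqrt y + 1) * (Nat.sqrt y + 1) % 2 = 1 := by
        rw [Nat.mul_mod, show (Nat.sqrt y + 1) % 2 = 1 by omega]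
      omega
  rw [blockString_eq_one_iff_of_valve hsucc]
  omega

end valve

/-- The condition on a *lag* `L` under which the source block `r` can be sent to the target block
`r + 2 * L r`: the lag fits into the stretching, grows by at most one and only if the target blocks
involved are valves, and carries marks to marks. -/
structure IsLag (V M M' : ℕ → Prop) (L : ℕ → ℕ) : Prop where
  two_mul_le : ∀ r, 2 * L r ≤ r
  succ_eq : ∀ r, L (r + 1) = L r ∨
    (L (r + 1) = L r + 1 ∧ 2 ≤ r ∧ r % 2 = 0 ∧ ∀ i ≤ 2, V (r + 2 * L r + i))
  mark : ∀ r, M r → M' (r + 2 * L r)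

/-- The number of additional target positions on which each half of the source block `r` is spread,
so that the image of the block ends where that of the next block begins. -/
def padding (L : ℕ → ℕ) (r : ℕ) : ℕ :=
  if L (r + 1) = L r then 2 * L r else 2 * r + 6 * L r + 4

/-- The map that spreads each half of the source block `r` over additional `padding L r` positions
of the target, at most `7` per source position, starting at the target block `r + 2 * L r`. -/
def stretch (L : ℕ → ℕ) (x : ℕ) : ℕ :=
  let r := Nat.sqrt x
  let o := x - r * r
  (r + 2 * L r) * (r + 2 * L r) + (o + min (7 * o) (padding L r) + min (7 * (o - r)) (padding L r))

theorem stretch_mul_self_add {L : ℕ → ℕ} {r o : ℕ} (ho : o ≤ 2 * r) :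
    stretch L (r * r + o) = (r + 2 * L r) * (r + 2 * L r) +
      (o + min (7 * o) (padding L r) + min (7 * (o - r)) (padding L r)) := by
  simp only [stretch, Nat.sqrt_add_eq r (by omega : o ≤ r + r), Nat.add_sub_cancel_left]

namespace IsLag

variable {V M M' : ℕ → Prop} {L : ℕ → ℕ}

theorem padding_le (h : IsLag V M M' L) (r : ℕ) : padding L r ≤ 7 * r := by
  have := h.two_mul_le r
  have := h.succ_eq r
  unfold padding
  split_ifs <;> omega

theorem succ_sq (h : IsLag V M M' L) (r : ℕ) :
    (r + 1 + 2 * L (r + 1)) * (r + 1 + 2 * L (r + 1)) =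
      (r + 2 * L r) * (r + 2 * L r) + (2 * r + 1 + 2 * padding L r) := by
  unfold padding
  rcases h.succ_eq r with hL | ⟨hL, -⟩
  · rw [if_pos hL, hL]
    ring
  · rw [if_neg (by omega), hL]
    ring

theorem stretch_succ (h : IsLag V M M' L) (x : ℕ) :
    stretch L x < stretch L (x + 1) ∧ stretch L (x + 1) ≤ stretch L x + 8 := by
  obtain ⟨o, ho, hx⟩ := exists_eq_sqrt_mul_sqrt_add x
  generalize Nat.sqrt x = r at *
  subst hx
  have hpad := h.padding_le r
  rw [stretch_mul_self_add ho]
  rcases ho.lt_or_eq with hlt | rfl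
  · rw [add_assoc (r * r), stretch_mul_self_add (by omega)]
    omega
  · have hnext : r * r + 2 * r + 1 = (r + 1) * (r + 1) + 0 := by ring
    rw [hnext, stretch_mul_self_add (Nat.zero_le _), h.succ_sq]
    omega

theorem sqrt_stretch_of_succ_ne (h : IsLag V M M' L) {r o : ℕ} (ho : o ≤ 2 * r)
    (hL : L (r + 1) ≠ L r) : V (Nat.sqrt (stretch L (r * r + o))) := by
  obtain ⟨-, -, -, hV⟩ := (h.succ_eq r).resolve_left hL
  have hpad : padding L r = 2 * r + 6 * L r + 4 := if_neg hL
  rw [stretch_mul_self_add ho, hpad]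
  set g := r + 2 * L r
  have hoffset : o + min (7 * o) (2 * r + 6 * L r + 4) + min (7 * (o - r)) (2 * r + 6 * L r + 4) <
      6 * g + 9 := by omega
  generalize o + min _ _ + min _ _ = p at *
  have hlow : g ≤ Nat.sqrt (g * g + p) := Nat.le_sqrt.2 (Nat.le_add_right _ _)
  have hhigh : Nat.sqrt (g * g + p) < g + 3 := Nat.sqrt_lt.2 (by linarith)
  simpa only [Nat.add_sub_cancel' hlow] using hV (Nat.sqrt (g * g + p) - g) (by omega)

theorem sqrt_stretch_of_succ_eq (h : IsLag V M M' L) {r o : ℕ} (ho : o ≤ 2 * r)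
    (hL : L (r + 1) = L r) : Nat.sqrt (stretch L (r * r + o)) = r + 2 * L r := by
  have := h.two_mul_le r
  rw [stretch_mul_self_add ho, padding, if_pos hL]
  exact Nat.sqrt_add_eq _ (by omega)

theorem blockString_stretch_of_not_valve (h : IsLag V M M' L) {r o : ℕ} (ho : o ≤ 2 * r)
    (hL : L (r + 1) = L r) (hV : ¬ V (r + 2 * L r)) :
    blockString V M' (stretch L (r * r + o)) = blockString ⊥ M (r * r + o) ∨
      blockString V M' (stretch L (r * r + o) + 1) = blockString ⊥ M (r * r + o) := by
  have hlag := h.two_mul_le r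
  have hsource := blockString_bot_mul_self_add (M := M) ho
  have hparity : (r + 2 * L r) % 2 = r % 2 := by omega
  rw [stretch_mul_self_add ho, padding, if_pos hL]
  set p := o + min (7 * o) (2 * L r) + min (7 * (o - r)) (2 * L r)
  have hp : p ≤ 2 * (r + 2 * L r) := by omega
  have hcenter : p = r + 2 * L r ↔ o = r := by omega
  have htarget := blockString_mul_self_add (M := M') hp hV
  by_cases hunmarked : o = r ∧ r % 2 ≠ 0 ∧ ¬ M r
  · right
    apply eq_of_eq_one_iff
    rw [add_assoc, blockString_mul_self_add (by omega) hV, hsource]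
    exact iff_of_false (by omega) (by tauto)
  · left
    apply eq_of_eq_one_iff
    rw [htarget, hsource, hcenter, hparity]
    have := h.mark r
    tauto

theorem blockString_stretch (h : IsLag V M M' L) (hV : ∀ j, V j → j % 2 = 1 → V (j + 1)) (x : ℕ) :
    blockString V M' (stretch L x) = blockString ⊥ M x ∨
      blockString V M' (stretch L x + 1) = blockString ⊥ M x := by
  obtain ⟨o, ho, hx⟩ := exists_eq_sqrt_mul_sqrt_add x
  generalize Nat.sqrt x = r at *
  subst hx
  have heven (hr : r % 2 = 0) : blockString ⊥ M (r * r + o) = 1 :=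
    (blockString_bot_mul_self_add ho).2 (.inl hr)
  by_cases hL : L (r + 1) = L r
  · have hsqrt := h.sqrt_stretch_of_succ_eq ho hL
    by_cases hvalve : V (r + 2 * L r)
    · rw [← hsqrt] at hvalve
      rcases Nat.mod_two_eq_zero_or_one r with hr | hr
      · rw [heven hr]
        exact blockString_eq_one_or_succ_eq_one hV hvalve
      · exact blockString_eq_or_succ_eq hvalve (hV _ hvalve (by omega)) _
    · exact h.blockString_stretch_of_not_valve ho hL hvalve
  · rw [heven ((h.succ_eq r).resolve_left hL).2.2.1]
    exact blockString_eq_one_or_succ_eq_one hV (h.sqrt_stretch_of_succ_ne ho hL)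

theorem qIred (h : IsLag V M M' L) (hV : ∀ j, V j → j % 2 = 1 → V (j + 1)) :
    QIred (blockString ⊥ M) (blockString V M') :=
  qIred_of_strictMono (strictMono_nat_of_lt_succ fun x ↦ (h.stretch_succ x).1)
    (fun x ↦ (h.stretch_succ x).2) (h.blockString_stretch hV)

end IsLag

/-! ### Rigidity of quasi-isometries between block strings -/

section rigidity

variable {V M M' : ℕ → Prop}

theorem eq_center_of_blockString {p : ℕ} (hV : ¬ V (Nat.sqrt p))
    (hp : blockString V M p = 1 ↔ Nat.sqrt p % 2 = 1) :
    p = Nat.sqrt p * Nat.sqrt p + Nat.sqrt p := by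
  have := blockString_eq_one_iff_of_not_valve (M := M) hV
  by_cases h : Nat.sqrt p % 2 = 0
  · simp [this, h] at hp
  · exact ((this.1 (hp.2 (Nat.mod_two_ne_zero.1 h))).resolve_left h).1

theorem sqrt_eq_of_blockString {d j p q : ℕ} (hd : d < j) (hprev : ¬ V (j - 1))
    (hnext : ¬ V (j + 1)) (hp : Nat.sqrt p = j) (hqp : q ≤ p + d) (hpq : p ≤ q + d)
    (hq : blockString V M q = 1 ↔ j % 2 = 0) : Nat.sqrt q = j := by
  subst hp
  obtain ⟨o, ho, hpo⟩ := exists_eq_sqrt_mul_sqrt_add p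
  obtain ⟨o', ho', hqo⟩ := exists_eq_sqrt_mul_sqrt_add q
  have hcenter := eq_center_of_blockString (V := V) (M := M) (p := q)
  generalize Nat.sqrt q = i at *
  generalize Nat.sqrt p = j at *
  have hle : i ≤ j + 1 := by
    by_contra! h
    nlinarith
  have hge : j ≤ i + 1 := by
    by_contra! h
    nlinarith
  obtain rfl | rfl | rfl : i = j ∨ i = j + 1 ∨ j = i + 1 := by omega
  · rfl
  · have := hcenter hnext (by omega)
    linarith
  · have := hcenter hprev (by omega)
    linarith

/-- The target block that receives the first position of the source block `r`. -/
def blockImage (f : ℕ → ℕ) (r : ℕ) : ℕ := Nat.sqrt (f (r * r))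

namespace IsQI

variable {Γ : Type*} {α β : ℕ → Γ} {C r : ℕ} {f : ℕ → ℕ}

theorem blockImage_le_mul (h : IsQI C α β f) (hr : 1 ≤ r) : blockImage f r ≤ C * r := by
  obtain ⟨n, hn⟩ := Nat.exists_eq_add_of_le (Nat.mul_pos hr hr)
  have hle := h.apply_add_le le_rfl n
  have hsq : C * (r * r) ≤ C * r * (C * r) := by nlinarith [Nat.mul_le_mul_right (C * (r * r)) h.1]
  rw [← Nat.lt_add_one_iff, blockImage, Nat.sqrt_lt, hn]
  rw [hn] at hsq
  nlinarith [h.apply_one_le]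

theorem le_blockImage_of_mul_le (h : IsQI C α β f) {m : ℕ} (hr : 1 ≤ r) (hm : (C + 1) * m ≤ r) :
    m ≤ blockImage f r := by
  have hrr : 1 ≤ r * r := Nat.mul_pos hr hr
  rw [blockImage, Nat.le_sqrt]
  rcases Nat.lt_or_ge 1 (m * m) with hlt | hle
  · obtain ⟨j, hj⟩ := Nat.exists_eq_add_of_lt hlt
    have hroom : (C + 1) * (j + 1) + 1 ≤ r * r := calc
      _ ≤ (C + 1) * (m * m) := by rw [hj]; linarith
      _ ≤ (C + 1) * m * ((C + 1) * m) := by nlinarith [Nat.zero_le (C * (C + 1) * (m * m))]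
      _ ≤ r * r := Nat.mul_le_mul hm hm
    have hfar := h.add_le_apply_add (j := j + 1) (d := r * r - 1) le_rfl (by omega)
      (Nat.le_sub_of_add_le hroom)
    rw [Nat.add_sub_cancel' hrr] at hfar
    have := h.one_le le_rfl
    omega
  · exact hle.trans (h.one_le hrr)

theorem blockImage_add_le (h : IsQI C α β f) (hr : 1 ≤ r) (hle : r ≤ blockImage f r + 1) (d : ℕ) :
    blockImage f (r + d) ≤ blockImage f r + C * d := by
  have hup := h.apply_add_le (Nat.mul_pos hr hr) (2 * r * d + d * d)
  have hlt : f (r * r) < (blockImage f r + 1) * (blockImage f r + 1) := Nat.lt_succ_sqrt _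
  rw [← Nat.lt_add_one_iff, blockImage, Nat.sqrt_lt,
    show (r + d) * (r + d) = r * r + (2 * r * d + d * d) by ring]
  have hlinear : C * d * r ≤ C * d * (blockImage f r + 1) := Nat.mul_le_mul_left _ hle
  have hsquare : C * (d * d) ≤ C * (d * d) * C := Nat.le_mul_of_pos_right _ h.1
  linarith

theorem add_le_blockImage_add (h : IsQI C α β f) (hr : 1 ≤ r) (hle : blockImage f r ≤ 2 * r)
    {m : ℕ} (hm : 1 ≤ m) : blockImage f r + m ≤ blockImage f (r + 2 * (C + 1) * m) := by
  have hup := h.add_le_apply_add (j := 4 * r * m + m * m) (Nat.mul_pos hr hr)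
    (d := 2 * r * (2 * (C + 1) * m) + 2 * (C + 1) * m * (2 * (C + 1) * m)) (by nlinarith)
    (by nlinarith [Nat.zero_le (C * m * (C * m)), Nat.zero_le (C * m * m), Nat.zero_le (m * m)])
  have hsq : blockImage f r * blockImage f r ≤ f (r * r) := Nat.sqrt_le _
  rw [blockImage.eq_def f (_ + _), Nat.le_sqrt, show (r + 2 * (C + 1) * m) * (r + 2 * (C + 1) * m) =
    r * r + (2 * r * (2 * (C + 1) * m) + 2 * (C + 1) * m * (2 * (C + 1) * m)) by ring]
  nlinarith [Nat.mul_le_mul_right m hle]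

theorem blockString_apply_eq_one_iff (h : IsQI C (blockString ⊥ M) (blockString V M') f) {o : ℕ}
    (hr : 1 ≤ r) (ho : o ≤ 2 * r) (hor : o ≠ r) :
    blockString V M' (f (r * r + o)) = 1 ↔ r % 2 = 0 := by
  rw [h.apply_eq (by nlinarith), blockString_bot_mul_self_add ho]
  tauto

theorem mod_two_blockImage (h : IsQI C (blockString ⊥ M) (blockString V M') f)
    (hr : C + 2 ≤ r) (hj : (C + 1) * (C + 2) ≤ blockImage f r) (hV : ¬ V (blockImage f r)) :
    blockImage f r % 2 = r % 2 := by
  by_contra hparity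
  have hpos : 1 ≤ r * r := by nlinarith
  have hstart := h.blockString_apply_eq_one_iff (r := r) (o := 0) (by omega) (by omega) (by omega)
  have hlater :=
    h.blockString_apply_eq_one_iff (r := r) (o := C + 1) (by omega) (by omega) (by omega)
  have hlt : f (r * r) < f (r * r + (C + 1)) := h.lt hpos (by omega)
  have hle : f (r * r + (C + 1)) ≤ f (r * r) + C * (C + 1) := h.apply_add_le hpos _
  have hcenter : f (r * r) = blockImage f r * blockImage f r + blockImage f r :=
    eq_center_of_blockString hV (hstart.trans (by change _ ↔ blockImage f r % 2 = 1; omega))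
  have hsqrt : Nat.sqrt (f (r * r + (C + 1))) = blockImage f r := by
    obtain ⟨e, he⟩ := Nat.exists_eq_add_of_le hlt.le
    rw [he, hcenter, add_assoc]
    exact Nat.sqrt_add_eq _ (by nlinarith)
  have hcenter' := eq_center_of_blockString (hsqrt ▸ hV) (hlater.trans (by rw [hsqrt]; omega))
  rw [hsqrt] at hcenter'
  omega

theorem sqrt_apply_mul_self_add (h : IsQI C (blockString ⊥ M) (blockString V M') f)
    (hr : C + 2 ≤ r) (hj : (C + 1) * (C + 2) ≤ blockImage f r)
    (hV : ∀ i ∈ Set.Icc (blockImage f r - 1) (blockImage f r + 1), ¬ V i) {o : ℕ}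
    (ho : o ≤ 2 * r) (hor : o ≠ r) : Nat.sqrt (f (r * r + o)) = blockImage f r := by
  have hparity := h.mod_two_blockImage hr hj (hV _ ⟨by omega, by omega⟩)
  induction o using Nat.strong_induction_on with
  | _ o ih =>
    have hcolor := h.blockString_apply_eq_one_iff (by omega) ho hor
    rw [← hparity] at hcolor
    rcases Nat.eq_zero_or_pos o with rfl | hpos
    · rfl
    obtain ⟨o', d, rfl, hd, hd2, hne⟩ : ∃ o' d, o = o' + d ∧ 0 < d ∧ d ≤ 2 ∧ o' ≠ r := by
      by_cases hprev : o - 1 = r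
      · exact ⟨o - 2, 2, by omega⟩
      · exact ⟨o - 1, 1, by omega⟩
    have hle := h.apply_add_le (x := r * r + o') (by nlinarith) d
    have hge := h.apply_le_apply_add_add (x := r * r + o') (by nlinarith) d
    rw [add_assoc] at hle hge
    exact sqrt_eq_of_blockString (d := C * d) (by nlinarith) (hV _ ⟨le_rfl, by omega⟩)
      (hV _ ⟨by omega, le_rfl⟩) (ih o' (by omega) (by omega) hne) hle hge hcolor

theorem blockImage_succ (h : IsQI C (blockString ⊥ M) (blockString V M') f)
    (hr : C + 2 ≤ r) (hj : (C + 1) * (C + 2) ≤ blockImage f r)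
    (hV : ∀ i ∈ Set.Icc (blockImage f r - 1) (blockImage f r + 1), ¬ V i) :
    blockImage f (r + 1) = blockImage f r + 1 := by
  have hrr : (r + 1) * (r + 1) = r * r + 2 * r + 1 := by ring
  have hend := h.sqrt_apply_mul_self_add hr hj hV (o := 2 * r) le_rfl (by omega)
  have hle : blockImage f (r + 1) < blockImage f r + 2 := by
    have := h.apply_succ_le (x := r * r + 2 * r) (by nlinarith)
    have : f (r * r + 2 * r) < (blockImage f r + 1) * (blockImage f r + 1) :=
      hend ▸ Nat.lt_succ_sqrt _
    rw [blockImage, Nat.sqrt_lt, hrr]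
    nlinarith
  have hge : blockImage f r ≤ blockImage f (r + 1) :=
    Nat.sqrt_le_sqrt (h.lt (by nlinarith) (by linarith)).le
  have hne : blockImage f (r + 1) ≠ blockImage f r := fun heq ↦ by
    have := h.mod_two_blockImage hr hj (hV _ ⟨by omega, by omega⟩)
    have := h.mod_two_blockImage (r := r + 1) (by omega) (heq ▸ hj)
      (heq ▸ hV _ ⟨by omega, by omega⟩)
    omega
  omega

theorem blockImage_add (h : IsQI C (blockString ⊥ M) (blockString V M') f)
    (hr : C + 2 ≤ r) (hj : (C + 1) * (C + 2) ≤ blockImage f r) {n : ℕ}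
    (hV : ∀ i ∈ Set.Icc (blockImage f r - 1) (blockImage f r + n), ¬ V i) :
    blockImage f (r + n) = blockImage f r + n := by
  induction n with
  | zero => rfl
  | succ n ih =>
    have ih := ih fun i hi ↦ hV i ⟨hi.1, hi.2.trans (by omega)⟩
    have hnext := h.blockImage_succ (r := r + n) (by omega) (by omega)
      fun i hi ↦ hV i ⟨by have := hi.1; omega, by have := hi.2; omega⟩
    rw [← add_assoc, hnext, ih, add_assoc]

theorem mark_blockImage (h : IsQI C (blockString ⊥ M) (blockString V M') f)
    (hr : C + 2 ≤ r) (hj : (C + 1) * (C + 2) ≤ blockImage f r)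
    (hV : ∀ i ∈ Set.Icc (blockImage f r - 1) (blockImage f r + 1), ¬ V i)
    (hodd : r % 2 = 1) (hM : M r) : M' (blockImage f r) := by
  have hparity := h.mod_two_blockImage hr hj (hV _ ⟨by omega, by omega⟩)
  have hend := h.sqrt_apply_mul_self_add hr hj hV (o := 2 * r) le_rfl (by omega)
  have hlow : f (r * r) ≤ f (r * r + r) := (h.lt (by nlinarith) (by omega)).le
  have hhigh : f (r * r + r) ≤ f (r * r + 2 * r) := (h.lt (by nlinarith) (by omega)).le
  have hsqrt : Nat.sqrt (f (r * r + r)) = blockImage f r :=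
    le_antisymm (hend ▸ Nat.sqrt_le_sqrt hhigh) (Nat.sqrt_le_sqrt hlow)
  have hone : blockString V M' (f (r * r + r)) = 1 := by
    rw [h.apply_eq (by nlinarith), blockString_bot_mul_self_add (by omega)]
    exact .inr ⟨rfl, hM⟩
  rw [blockString_eq_one_iff_of_not_valve (hsqrt ▸ hV _ ⟨by omega, by omega⟩), hsqrt] at hone
  exact (hone.resolve_left (by omega)).2

end IsQI
end rigidity

/-! ### Encoding a constraint on walks -/

/-- Block `checkpoint T + 1` of the source is the one that is marked at time `T`. Having fourth
powers as successive values leaves room for `valve` in between, with quotients that exceed any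
constant. -/
def checkpoint (T : ℕ) : ℕ := 2 ^ 4 ^ (T + 1)

/-- The first block of the valve that separates the checkpoints of the times `T` and `T + 1`. -/
def valve (T : ℕ) : ℕ := checkpoint T * checkpoint T

theorem checkpoint_succ (T : ℕ) : checkpoint (T + 1) = valve T * valve T := by
  rw [valve, checkpoint, checkpoint]
  ring

theorem checkpoint_strictMono : StrictMono checkpoint := fun _ _ h ↦
  Nat.pow_lt_pow_right one_lt_two (Nat.pow_lt_pow_right (by norm_num) (Nat.succ_lt_succ h))

theorem valve_strictMono : StrictMono valve := fun _ _ h ↦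
  Nat.mul_self_lt_mul_self (checkpoint_strictMono h)

theorem mul_le_valve {m n T : ℕ} (hm : m ≤ checkpoint T) (hn : n ≤ checkpoint T) :
    m * n ≤ valve T :=
  Nat.mul_le_mul hm hn

theorem mul_valve_le_checkpoint_succ {n T : ℕ} (h : n ≤ valve T) :
    n * valve T ≤ checkpoint (T + 1) :=
  (Nat.mul_le_mul_right _ h).trans_eq (checkpoint_succ T).symm

theorem sixteen_mul_succ_le_checkpoint (T : ℕ) : 16 * (T + 1) ≤ checkpoint T := by
  induction T with
  | zero => rfl
  | succ T ih =>
    have hvalve := mul_le_valve (m := 16) (T := T) (by omega) le_rfl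
    have := mul_valve_le_checkpoint_succ (n := 16) (T := T) (by omega)
    omega

theorem sixteen_mul_checkpoint_le_valve (T : ℕ) : 16 * checkpoint T ≤ valve T :=
  mul_le_valve (by have := sixteen_mul_succ_le_checkpoint T; omega) le_rfl

theorem sixteen_mul_valve_le_checkpoint {T T' : ℕ} (h : T < T') :
    16 * valve T ≤ checkpoint T' := by
  have := sixteen_mul_succ_le_checkpoint T
  have := sixteen_mul_checkpoint_le_valve T
  exact (mul_valve_le_checkpoint_succ (by omega)).trans (checkpoint_strictMono.monotone h)

theorem valve_mod_two (T : ℕ) : valve T % 2 = 0 :=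
  Nat.even_iff.1 ((Nat.even_pow.2 ⟨even_two, by positivity⟩).mul_left _)

/-- The blocks of the target that belong to some valve. -/
def IsValve (j : ℕ) : Prop := ∃ T, valve T ≤ j ∧ j ≤ valve T + 2

/-- The marked blocks of the source. -/
def SourceMark (r : ℕ) : Prop := ∃ T, r = checkpoint T + 1

/-- The marked blocks of the target: a marked block of the source can be sent to one of them with
lag `2 * k` at time `T` only if `G T k` holds. -/
def TargetMark (G : ℕ → ℕ → Prop) (j : ℕ) : Prop :=
  ∃ T, ∃ k ≤ T, j = checkpoint T + 1 + 2 * k ∧ G T k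

/-- The source string, whose only features are the marks at the checkpoints. -/
noncomputable def checkpointString : ℕ → Fin 2 := blockString ⊥ SourceMark

/-- The target string, whose marks encode the constraint `G`. -/
noncomputable def constraintString (G : ℕ → ℕ → Prop) : ℕ → Fin 2 :=
  blockString IsValve (TargetMark G)

theorem IsValve.succ_of_odd {j : ℕ} (h : IsValve j) (hodd : j % 2 = 1) : IsValve (j + 1) := by
  obtain ⟨T, hle, hge⟩ := h
  have := valve_mod_two T
  exact ⟨T, by omega⟩

theorem not_isValve {T j : ℕ} (hlow : valve T + 2 < j) (hhigh : j < valve (T + 1)) :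
    ¬ IsValve j := by
  rintro ⟨T', hle, hge⟩
  have h : T < T' := valve_strictMono.lt_iff_lt.1 (by omega)
  have h' : T' < T + 1 := valve_strictMono.lt_iff_lt.1 (by omega)
  omega

theorem TargetMark.exists_of_valve_lt {G : ℕ → ℕ → Prop} {T j : ℕ} (h : TargetMark G j)
    (hlow : valve T < j) (hhigh : j < valve (T + 1)) :
    ∃ k ≤ T + 1, j = checkpoint (T + 1) + 1 + 2 * k ∧ G (T + 1) k := by
  obtain ⟨T', k, hk, hj, hG⟩ := h
  have := sixteen_mul_succ_le_checkpoint T'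
  have := sixteen_mul_checkpoint_le_valve T'
  obtain hlt | rfl | hgt := lt_trichotomy T' (T + 1)
  · have := valve_strictMono.monotone (Nat.le_of_lt_succ hlt)
    omega
  · exact ⟨k, hk, hj, hG⟩
  · have := sixteen_mul_valve_le_checkpoint hgt
    omega

section computability

theorem primrec_checkpoint : Primrec checkpoint :=
  primrec₂_pow.comp (.const 2) (primrec₂_pow.comp (.const 4) .succ)

theorem primrecPred_isValve : PrimrecPred IsValve := by
  have hvalve : Primrec valve := Primrec.nat_mul.comp primrec_checkpoint primrec_checkpoint
  have hbody : PrimrecRel fun T j ↦ valve T ≤ j ∧ j ≤ valve T + 2 :=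
    (Primrec.nat_le.comp (hvalve.comp .fst) .snd).and
      (Primrec.nat_le.comp .snd (Primrec.nat_add.comp (hvalve.comp .fst) (.const 2)))
  refine (hbody.exists_lt.comp .id .id).of_eq fun j ↦
    ⟨fun ⟨T, _, h⟩ ↦ ⟨T, h⟩, fun ⟨T, h⟩ ↦ ⟨T, ?_, h⟩⟩
  have := sixteen_mul_succ_le_checkpoint T
  have := sixteen_mul_checkpoint_le_valve T
  simp only [id_eq]
  omega

theorem primrecPred_sourceMark : PrimrecPred SourceMark := by
  have hbody : PrimrecRel fun T r ↦ r = checkpoint T + 1 :=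
    Primrec.eq.comp .snd (Primrec.succ.comp (primrec_checkpoint.comp .fst))
  refine (hbody.exists_lt.comp .id .id).of_eq fun r ↦
    ⟨fun ⟨T, _, h⟩ ↦ ⟨T, h⟩, fun ⟨T, h⟩ ↦ ⟨T, ?_, h⟩⟩
  have := sixteen_mul_succ_le_checkpoint T
  simp only [id_eq]
  omega

theorem primrecPred_targetMark {G : ℕ → ℕ → Prop} (hG : PrimrecRel G) :
    PrimrecPred (TargetMark G) := by
  have hlag : PrimrecRel fun (k : ℕ) (p : ℕ × ℕ) ↦
      p.2 = checkpoint p.1 + 1 + 2 * k ∧ G p.1 k :=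
    (Primrec.eq.comp (Primrec.snd.comp .snd) (Primrec.nat_add.comp
      (Primrec.succ.comp (primrec_checkpoint.comp (Primrec.fst.comp .snd)))
      (Primrec.nat_mul.comp (.const 2) .fst))).and (hG.comp (Primrec.fst.comp .snd) .fst)
  have htime : PrimrecRel fun T j ↦
      ∃ k ∈ List.range (T + 1), j = checkpoint T + 1 + 2 * k ∧ G T k :=
    hlag.exists_mem_list.comp (Primrec.list_range.comp (Primrec.succ.comp .fst)) .id
  refine (htime.exists_lt.comp .id .id).of_eq fun j ↦ ⟨?_, ?_⟩
  · rintro ⟨T, _, k, hk, h⟩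
    exact ⟨T, k, Nat.lt_succ_iff.1 (List.mem_range.1 hk), h⟩
  · rintro ⟨T, k, hk, h⟩
    have := sixteen_mul_succ_le_checkpoint T
    exact ⟨T, by simp only [id_eq]; omega, k, List.mem_range.2 (Nat.lt_succ_of_le hk), h⟩

theorem computable_checkpointString : Computable checkpointString :=
  computable_blockString ⟨fun _ ↦ .isFalse id, .const false⟩ primrecPred_sourceMark

theorem computable_constraintString {G : ℕ → ℕ → Prop} (hG : PrimrecRel G) :
    Computable (constraintString G) :=
  computable_blockString primrecPred_isValve (primrecPred_targetMark hG)

end computability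

/-! ### From walks to quasi-isometries and back -/

/-- The time at which the source block `r` is traversed if the walk `K` controls the lag: the
time advances when the target block `r + 2 * K (stage K r)` is the start of the current valve. -/
def stage (K : ℕ → ℕ) : ℕ → ℕ
  | 0 => 0
  | r + 1 => if r + 2 * K (stage K r) = valve (stage K r) then stage K r + 1 else stage K r

namespace IsWalk

variable {G : ℕ → ℕ → Prop} {K : ℕ → ℕ}

theorem add_two_mul_stage_le (hK : IsWalk G 1 0 K) (r : ℕ) :
    r + 2 * K (stage K r) ≤ valve (stage K r) := by
  induction r with
  | zero =>
    have := hK.le_self 0 le_rfl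
    simp only [stage]
    omega
  | succ r ih =>
    simp only [stage]
    split_ifs with h
    · have := hK.succ_le (stage K r) (Nat.zero_le _)
      have := valve_strictMono (Nat.lt_add_one (stage K r))
      have := sixteen_mul_succ_le_checkpoint (stage K r)
      have := sixteen_mul_checkpoint_le_valve (stage K r)
      have := sixteen_mul_valve_le_checkpoint (Nat.lt_add_one (stage K r))
      have := sixteen_mul_checkpoint_le_valve (stage K r + 1)
      omega
    · omega

theorem valve_lt_of_stage_eq_succ (hmono : Monotone K) {r T : ℕ} (h : stage K r = T + 1) :
    valve T < r + 2 * K (stage K r) := by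
  induction r with
  | zero => simp [stage] at h
  | succ r ih =>
    simp only [stage] at h ⊢
    split_ifs at h ⊢ with hvalve
    · obtain rfl : stage K r = T := by omega
      have := hmono (Nat.le_add_right (stage K r) 1)
      omega
    · have := ih h
      omega

theorem two_mul_stage_le (hK : IsWalk G 1 0 K) (hmono : Monotone K) (r : ℕ) :
    2 * K (stage K r) ≤ r := by
  have hle := hK.le_self (stage K r) (Nat.zero_le _)
  rcases hT : stage K r with _ | T
  · rw [hT] at hle
    omega
  · have hvalve := valve_lt_of_stage_eq_succ hmono hT
    have := sixteen_mul_succ_le_checkpoint T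
    have := sixteen_mul_checkpoint_le_valve T
    rw [hT] at hle hvalve
    omega

theorem stage_checkpoint_succ (hK : IsWalk G 1 0 K) (hmono : Monotone K) (T : ℕ) :
    stage K (checkpoint T + 1) = T := by
  have hle := hK.le_self (stage K (checkpoint T + 1)) (Nat.zero_le _)
  have hvalve := hK.add_two_mul_stage_le (checkpoint T + 1)
  apply le_antisymm
  · by_contra! hlt
    obtain ⟨T', hT'⟩ := Nat.exists_eq_add_of_lt hlt
    have := valve_lt_of_stage_eq_succ hmono hT'
    have := sixteen_mul_checkpoint_le_valve (T + T')
    have := sixteen_mul_succ_le_checkpoint (T + T')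
    have := checkpoint_strictMono.monotone (Nat.le_add_right T T')
    omega
  · by_contra! hlt
    have := sixteen_mul_valve_le_checkpoint hlt
    omega

theorem isLag (hK : IsWalk G 1 0 K) (hmono : Monotone K) :
    IsLag IsValve SourceMark (TargetMark G) (fun r ↦ K (stage K r)) where
  two_mul_le := hK.two_mul_stage_le hmono
  succ_eq r := by
    simp only [stage]
    split_ifs with h
    · have := hmono (Nat.le_add_right (stage K r) 1)
      have := hK.succ_le (stage K r) (Nat.zero_le _)
      have := hK.two_mul_stage_le hmono r
      have := sixteen_mul_succ_le_checkpoint (stage K r)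
      have := sixteen_mul_checkpoint_le_valve (stage K r)
      have := valve_mod_two (stage K r)
      rcases (by omega : K (stage K r + 1) = K (stage K r) ∨
        K (stage K r + 1) = K (stage K r) + 1) with hK' | hK'
      · exact .inl hK'
      · exact .inr ⟨hK', by omega, by omega, fun i hi ↦ ⟨stage K r, by omega⟩⟩
    · exact .inl rfl
  mark := by
    rintro _ ⟨T, rfl⟩
    simp only [hK.stage_checkpoint_succ hmono]
    exact ⟨T, K T, hK.le_self T (Nat.zero_le _), rfl, hK.rel T (Nat.zero_le _)⟩

theorem qIred (hK : IsWalk G 1 0 K) (hmono : Monotone K) :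
    QIred checkpointString (constraintString G) :=
  (hK.isLag hmono).qIred fun _ h ↦ h.succ_of_odd

end IsWalk

/-- The walk read off from a quasi-isometry: half of its lag, counted in blocks, at time `T`. -/
def checkpointLag (f : ℕ → ℕ) (T : ℕ) : ℕ :=
  (blockImage f (checkpoint T + 1) - (checkpoint T + 1)) / 2

theorem computable_checkpointLag {f : ℕ → ℕ} (hf : Computable f) :
    Computable (checkpointLag f) := by
  have hstart : Primrec fun T ↦ checkpoint T + 1 := Primrec.succ.comp primrec_checkpoint
  have himage : Computable fun T ↦ blockImage f (checkpoint T + 1) :=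
    Primrec.nat_sqrt.to_comp.comp (hf.comp (Primrec.nat_mul.comp hstart hstart).to_comp)
  exact (Primrec.nat_div.comp .id (.const 2)).to_comp.comp
    (Primrec.nat_sub.to_comp.comp himage hstart.to_comp)

namespace IsQI

variable {G : ℕ → ℕ → Prop} {C : ℕ} {f : ℕ → ℕ}

theorem blockImage_checkpoint_mem_Ioo {Γ : Type*} {α β : ℕ → Γ} (h : IsQI C α β f) {T : ℕ}
    (hT : 100 * (C + 1) ≤ checkpoint T) :
    blockImage f (checkpoint (T + 1) + 1) ∈ Set.Ioo (valve T + 3) (valve (T + 1) - 2) := by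
  have hvalve := mul_le_valve hT le_rfl
  have hcheckpoint := mul_valve_le_checkpoint_succ (T := T) (n := 100 * (C + 1)) (by nlinarith)
  have hvalve' := mul_le_valve (T := T + 1) (m := 100 * (C + 1)) (by nlinarith) le_rfl
  constructor
  · exact h.le_blockImage_of_mul_le (by omega) (by nlinarith)
  · refine (h.blockImage_le_mul (by omega)).trans_lt (Nat.lt_sub_of_add_lt ?_)
    nlinarith

theorem blockImage_checkpoint (h : IsQI C checkpointString (constraintString G) f) {T : ℕ}
    (hT : 100 * (C + 1) ≤ checkpoint T) : ∃ k ≤ T + 1,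
      blockImage f (checkpoint (T + 1) + 1) = checkpoint (T + 1) + 1 + 2 * k ∧ G (T + 1) k := by
  obtain ⟨hlow, hhigh⟩ := h.blockImage_checkpoint_mem_Ioo hT
  have hlarge : (C + 1) * (C + 2) ≤ valve T := mul_le_valve (by omega) (by omega)
  have := sixteen_mul_checkpoint_le_valve T
  have := sixteen_mul_valve_le_checkpoint (Nat.lt_add_one T)
  have hodd : (checkpoint (T + 1) + 1) % 2 = 1 := by
    rw [checkpoint_succ, Nat.add_mod, Nat.mul_mod, valve_mod_two]
  have hmark : TargetMark G (blockImage f (checkpoint (T + 1) + 1)) :=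
    h.mark_blockImage (by omega) (by omega)
      (fun i hi ↦ not_isValve (T := T) (by have := hi.1; omega) (by have := hi.2; omega))
      hodd ⟨T + 1, rfl⟩
  exact hmark.exists_of_valve_lt (by omega) (by omega)

theorem blockImage_add_of_lt_valve (h : IsQI C checkpointString (constraintString G) f)
    {T r n : ℕ} (hT : 100 * (C + 1) ≤ checkpoint T) (hr : C + 2 ≤ r)
    (hlow : valve T + 4 ≤ blockImage f r) (hhigh : blockImage f r + n < valve (T + 1)) :
    blockImage f (r + n) = blockImage f r + n := by
  have hlarge : (C + 1) * (C + 2) ≤ valve T := mul_le_valve (by omega) (by omega)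
  exact h.blockImage_add hr (by omega) fun i hi ↦
    not_isValve (T := T) (by have := hi.1; omega) (hi.2.trans_lt hhigh)

/-- Between two checkpoints, the lag changes only at the valve. A jump over six target blocks, which
carries the image across the valve, takes at most `12 * (C + 1)` source blocks, and these have
images at most `C` times as far apart. -/
theorem blockImage_checkpoint_drift (h : IsQI C checkpointString (constraintString G) f)
    {T k k' : ℕ} (hT : 100 * (C + 1) ≤ checkpoint T) (hk : k ≤ T + 1)
    (hlag : blockImage f (checkpoint (T + 1) + 1) = checkpoint (T + 1) + 1 + 2 * k)
    (hlag' : blockImage f (checkpoint (T + 1 + 1) + 1) = checkpoint (T + 1 + 1) + 1 + 2 * k') :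
    k' ≤ k + C * (12 * (C + 1)) ∧ k ≤ k' + C * (12 * (C + 1)) := by
  have hscale := sixteen_mul_valve_le_checkpoint (Nat.lt_add_one T)
  have hscale' := sixteen_mul_checkpoint_le_valve (T + 1)
  have hscale'' := sixteen_mul_valve_le_checkpoint (Nat.lt_add_one (T + 1))
  have := sixteen_mul_checkpoint_le_valve (T + 1 + 1)
  have := sixteen_mul_succ_le_checkpoint (T + 1)
  have hjump : C * (12 * (C + 1)) ≤ valve T := mul_le_valve (by omega) (by omega)
  have hjump' : 12 * (C + 1) ≤ C * (12 * (C + 1)) := Nat.le_mul_of_pos_left _ h.1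
  obtain ⟨n, hn⟩ : ∃ n, valve (T + 1) = checkpoint (T + 1) + 1 + 2 * k + 2 + n :=
    Nat.exists_eq_add_of_le (by omega)
  obtain ⟨r, hr⟩ : ∃ r, r = checkpoint (T + 1) + 1 + n := ⟨_, rfl⟩
  have hbefore : blockImage f r = valve (T + 1) - 2 := by
    rw [hr, h.blockImage_add_of_lt_valve hT] <;> omega
  have hcross : blockImage f r + 6 ≤ blockImage f (r + 12 * (C + 1)) := by
    have := h.add_le_blockImage_add (r := r) (by omega) (by omega) (m := 6) (by norm_num)
    rwa [show 2 * (C + 1) * 6 = 12 * (C + 1) by ring] at this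
  have hcross' : blockImage f (r + 12 * (C + 1)) ≤ blockImage f r + C * (12 * (C + 1)) :=
    h.blockImage_add_le (by omega) (by omega) _
  obtain ⟨m, hm⟩ : ∃ m, checkpoint (T + 1 + 1) + 1 = r + 12 * (C + 1) + m :=
    Nat.exists_eq_add_of_le (by omega)
  have hafter :
      blockImage f (checkpoint (T + 1 + 1) + 1) = blockImage f (r + 12 * (C + 1)) + m := by
    rw [hm]
    exact h.blockImage_add_of_lt_valve (T := T + 1) (by omega) (by omega) (by omega) (by omega)
  omega

theorem isWalk_checkpointLag (h : IsQI C checkpointString (constraintString G) f) :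
    IsWalk G (C * (12 * (C + 1))) (100 * (C + 1) + 1) (checkpointLag f) := by
  have hlag (T : ℕ) (hT : 100 * (C + 1) + 1 ≤ T + 1) : checkpointLag f (T + 1) ≤ T + 1 ∧
      blockImage f (checkpoint (T + 1) + 1) = checkpoint (T + 1) + 1 + 2 * checkpointLag f (T + 1) ∧
      G (T + 1) (checkpointLag f (T + 1)) := by
    have := sixteen_mul_succ_le_checkpoint T
    obtain ⟨k, hk, himage, hG⟩ := h.blockImage_checkpoint (T := T) (by omega)
    obtain rfl : checkpointLag f (T + 1) = k := by
      rw [checkpointLag, himage]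
      omega
    exact ⟨hk, himage, hG⟩
  have hdrift (T : ℕ) (hT : 100 * (C + 1) + 1 ≤ T + 1) :=
    h.blockImage_checkpoint_drift (T := T)
      (by have := sixteen_mul_succ_le_checkpoint T; omega) (hlag T hT).1 (hlag T hT).2.1
      (hlag (T + 1) (by omega)).2.1
  constructor <;> rintro (_ | T) hT
  any_goals omega
  exacts [(hlag T hT).1, (hlag T hT).2.2, (hdrift T hT).1, (hdrift T hT).2]

end IsQI

/-- There exist two computable strings `α` and `β` over `{0,1}`
such that `α ≤_qi β` (a quasi-isometric reduction exists) but `α` is not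
mqi-reducible to `β` (no computable quasi-isometric reduction exists). -/
theorem qi_not_implies_mqi :
    ∃ α β : ℕ → Fin 2, Computable α ∧ Computable β ∧ QIred α β ∧ ¬ MQIred α β := by
  obtain ⟨K, hmono, hK⟩ := exists_isWalk_diagonalizes
  refine ⟨checkpointString, constraintString Diagonalizes, computable_checkpointString,
    computable_constraintString primrecRel_diagonalizes, hK.qIred hmono, ?_⟩
  rintro ⟨C, f, h, hf⟩
  exact h.isWalk_checkpointLag.not_computable (computable_checkpointLag hf)
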